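/- For every δ > 0 there exist η > 0 and N₀ such that the following holds for all N ≥ N₀. Let S ⊆ Z_N be nonempty and set ν := (N/|S|)·1_S. Suppose that |E[∏_{factors in F} ν(·) | x, x', y, y', z, z' ∈ Z_N] − 1| ≤ η for every nonempty subset F of the twelve factors ν(x), ν(x'), ν(z−x), ν(z−x'), ν(z'−x), ν(z'−x'), ν(y), ν(y'), ν(z−y), ν(z−y'), ν(z'−y), ν(z'−y'). Then every subset A ⊆ S × S containing no corner satisfies |A| ≤ δ|S|². -/

import Mathlib

/-!
Let `n = |S|` and `θ = n / N`. The points of `A` are the edges of a bipartite graph `G` between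
columns `x ∈ S` and rows `y ∈ S`; antidiagonals `z ∈ Z_N` form a third vertex class, with `x ~ z` if
`(x, z - x) ∈ A` and `y ~ z` if `(z - y, y) ∈ A`. A triangle is a corner or has `d = 0`, so if `A`
is corner-free, each edge `xy` of `G` lies in exactly one triangle, the one with `z = x + y`. The
graph `G` is dense on its `2n` vertices, while the other two graphs are contained in the sparse graph
`1_S(z - u)` of density `θ`; the statement is thus a triangle removal lemma with one dense and two
sparse sides.

* **Pseudorandomness.** The hypothesis gives the second and fourth moments of
  `p(z) = E_x ν(x)ν(z-x)` and `q(z,z') = E_x ν(x)ν(z-x)ν(z'-x)`, hence `p⁴` and `q⁴` are close to `1`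
  in `L¹` (`sum_abs_pow_four_sub_one_le`). This is what `IsTypicalKernel` records. The second moment
  of `q` also gives `N² ≤ 2n³` by looking at the diagonal, so `θ²N = n²/N` is large
  (`sq_le_two_mul_card_pow_three`).
* **Counting.** Over an `ε`-uniform pair `(U, V)` of `G`, two Cauchy–Schwarz steps replace the sparse
  relations by their majorant (`triangle_sum_pow_four_le`); the majorant is then replaced by the
  constant `θ` (`replace_kernel_by_const`), leaving the box norm of the balanced
  function of `G` on `U × V`, which is small by uniformity (`sum_edgeDev_box_le`). The outcome is
  `uniform_pair_count`.
* **Removal.** Szemerédi's regularity lemma is applied to the dense graph `G`. Edges in irregular,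
  diagonal or sparse pairs are discarded, and so are edges `uv` such that `u + v` has few neighbours
  in the part of `u` or of `v` (`card_light_le`). If `G` were dense, some pair of parts `(U, V)` would
  keep many edges, hence a positive proportion of all `z` would have many neighbours in both `U` and
  `V`. Counting yields about `θ²N|U||V|` triangles over `(U, V)`, but there are at most `|U||V|` of
  them, one for each edge (`no_heavy_uniform_pair`). This contradicts the size of `θ²N`
  (`sparse_removal`).
-/

open Finset

/-- The average (expectation with respect to the uniform measure) of `f` over `α`. -/
noncomputable def avg {α : Type*} [Fintype α] (f : α → ℝ) : ℝ :=
  (∑ x, f x) / (Fintype.card α)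

/-- The twelve factors `ν(x), ν(x'), ν(z-x), ν(z-x'), ν(z'-x), ν(z'-x'), ν(y), ν(y'),
ν(z-y), ν(z-y'), ν(z'-y), ν(z'-y')` appearing in the linear forms condition for corners
in products `S × S`. -/
noncomputable def productCornerFactors {N : ℕ} [NeZero N] (ν : ZMod N → ℝ)
    (x x' y y' z z' : ZMod N) : Fin 12 → ℝ :=
  ![ν x, ν x', ν (z - x), ν (z - x'), ν (z' - x), ν (z' - x'),
    ν y, ν y', ν (z - y), ν (z - y'), ν (z' - y), ν (z' - y')]

/-! ### Cauchy–Schwarz estimates for sparse kernels -/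

lemma weighted_cauchy_schwarz {ι : Type*} (I : Finset ι) (a b w : ι → ℝ)
    (ha : ∀ i ∈ I, 0 ≤ a i) (haw : ∀ i ∈ I, a i ≤ w i) :
    (∑ i ∈ I, a i * b i) ^ 2 ≤ (∑ i ∈ I, w i) * ∑ i ∈ I, w i * b i ^ 2 := by
  refine Finset.sum_sq_le_sum_mul_sum_of_sq_le_mul I (fun i hi => (ha i hi).trans (haw i hi))
    (fun i hi => mul_nonneg ((ha i hi).trans (haw i hi)) (sq_nonneg _)) fun i hi => ?_
  have h : a i ^ 2 ≤ w i ^ 2 := pow_le_pow_left₀ (ha i hi) (haw i hi) 2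
  nlinarith [mul_le_mul_of_nonneg_right h (sq_nonneg (b i))]

/-- A function whose second and fourth moments are close to `1` has `f ^ 4` close to `1` in `L¹`:
Cauchy–Schwarz applies to `|f ^ 4 - 1| = |f ^ 2 - 1| * (f ^ 2 + 1)`. -/
lemma sum_abs_pow_four_sub_one_le {ι : Type*} [Fintype ι] (f : ι → ℝ) (η : ℝ)
    (hη1 : η ≤ 1)
    (h2 : |∑ i, f i ^ 2 - Fintype.card ι| ≤ η * Fintype.card ι)
    (h4 : |∑ i, f i ^ 4 - Fintype.card ι| ≤ η * Fintype.card ι) :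
    ∑ i, |f i ^ 4 - 1| ≤ 5 * √η * Fintype.card ι := by
  set c : ℝ := (Fintype.card ι : ℝ) with hc
  have hc0 : 0 ≤ c := by positivity
  rcases hc0.eq_or_lt with h0 | hcpos
  · have : IsEmpty ι := by
      rw [← Fintype.card_eq_zero_iff]; exact_mod_cast (hc.symm.trans h0.symm)
    simp [← h0]
  have hη0 : 0 ≤ η := by
    by_contra h
    push Not at h
    have := (abs_nonneg _).trans h2
    nlinarith
  rw [abs_le] at h2 h4
  have e1 : ∑ i, (f i ^ 2 - 1) ^ 2 = ∑ i, f i ^ 4 - 2 * ∑ i, f i ^ 2 + c := by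
    rw [mul_sum, ← sum_sub_distrib, hc, ← card_univ, card_eq_sum_ones]
    push_cast
    rw [← sum_add_distrib]
    exact sum_congr rfl fun i _ => by ring
  have e2 : ∑ i, (f i ^ 2 + 1) ^ 2 = ∑ i, f i ^ 4 + 2 * ∑ i, f i ^ 2 + c := by
    rw [mul_sum, ← sum_add_distrib, hc, ← card_univ, card_eq_sum_ones]
    push_cast
    rw [← sum_add_distrib]
    exact sum_congr rfl fun i _ => by ring
  have cs := Finset.sum_mul_sq_le_sq_mul_sq univ (fun i => |f i ^ 2 - 1|) (fun i => f i ^ 2 + 1)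
  have e3 : ∀ i, |f i ^ 2 - 1| * (f i ^ 2 + 1) = |f i ^ 4 - 1| := by
    intro i
    have hp : 0 ≤ f i ^ 2 + 1 := by positivity
    rw [← abs_of_nonneg hp, ← abs_mul]
    congr 1; ring
  simp only [e3, sq_abs, e1, e2] at cs
  apply le_of_sq_le_sq _ (by positivity)
  refine cs.trans ?_
  have : (5 * √η * c) ^ 2 = 25 * η * c ^ 2 := by
    rw [mul_pow, mul_pow, Real.sq_sqrt hη0]; ring
  rw [this]
  have i1 : ∑ i, f i ^ 4 - 2 * ∑ i, f i ^ 2 + c ≤ 3 * η * c := by linarith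
  have i2 : ∑ i, f i ^ 4 + 2 * ∑ i, f i ^ 2 + c ≤ 7 * c := by nlinarith
  have i3 : 0 ≤ ∑ i, f i ^ 4 + 2 * ∑ i, f i ^ 2 + c := by rw [← e2]; positivity
  calc _ ≤ (3 * η * c) * (7 * c) := mul_le_mul i1 i2 i3 (by positivity)
    _ ≤ _ := by nlinarith [mul_nonneg hη0 (sq_nonneg c)]

/-- A kernel `Φ` whose first and second correlations over the first variable are, on average over
`Z`, those of the constant `a` can be replaced by `a` in sums against bounded functions,
even after restricting the second variable to an arbitrary subset of `Z`. -/
lemma replace_kernel_by_const {β Z : Type*} [Fintype β] [Fintype Z] (Φ : β → Z → ℝ)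
    (a τ : ℝ) (ha : 0 ≤ a) (hτ : 0 ≤ τ)
    (hq : ∑ z, ∑ z', |∑ w, Φ w z * Φ w z' - Fintype.card β * a ^ 2|
      ≤ τ * (Fintype.card β * a ^ 2) * (Fintype.card Z) ^ 2)
    (hp : ∑ z, |∑ w, Φ w z - Fintype.card β * a| ≤ τ * (Fintype.card β * a) * Fintype.card Z)
    (f : β → ℝ) (hf : ∀ w, |f w| ≤ 1) (Z' : Finset Z) :
    |∑ w, f w * ∑ z ∈ Z', Φ w z - a * #Z' * ∑ w, f w|
      ≤ √(3 * τ) * a * Fintype.card β * Fintype.card Z := by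
  set b : ℝ := (Fintype.card β : ℝ) with hb
  set N : ℝ := (Fintype.card Z : ℝ) with hN
  have hb0 : 0 ≤ b := by positivity
  have hN0 : 0 ≤ N := by positivity
  have hZ' : (#Z' : ℝ) ≤ N := by rw [hN]; exact_mod_cast card_le_univ Z'
  have hQ : ∑ z ∈ Z', ∑ z' ∈ Z', ∑ w, Φ w z * Φ w z'
      ≤ (#Z' : ℝ) ^ 2 * (b * a ^ 2) + τ * (b * a ^ 2) * N ^ 2 := by
    have h1 : ∑ z ∈ Z', ∑ z' ∈ Z', |∑ w, Φ w z * Φ w z' - b * a ^ 2|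
        ≤ τ * (b * a ^ 2) * N ^ 2 := by
      refine le_trans ?_ hq
      refine (sum_le_sum fun z _ => sum_le_univ_sum_of_nonneg fun z' => abs_nonneg _).trans ?_
      exact sum_le_univ_sum_of_nonneg fun z => sum_nonneg fun _ _ => abs_nonneg _
    have h2 : ∑ z ∈ Z', ∑ z' ∈ Z', (∑ w, Φ w z * Φ w z' - b * a ^ 2)
        ≤ τ * (b * a ^ 2) * N ^ 2 :=
      le_trans (sum_le_sum fun z _ => sum_le_sum fun z' _ => le_abs_self _) h1
    simp only [sum_sub_distrib, sum_const, nsmul_eq_mul] at h2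
    linarith
  have hP : (#Z' : ℝ) * (b * a) - τ * (b * a) * N ≤ ∑ z ∈ Z', ∑ w, Φ w z := by
    have h1 : ∑ z ∈ Z', |∑ w, Φ w z - b * a| ≤ τ * (b * a) * N :=
      le_trans (sum_le_univ_sum_of_nonneg fun _ => abs_nonneg _) hp
    have h2 : ∑ z ∈ Z', -(∑ w, Φ w z - b * a) ≤ τ * (b * a) * N :=
      le_trans (sum_le_sum fun z _ => neg_le_abs _) h1
    simp only [sum_neg_distrib, sum_sub_distrib, sum_const, nsmul_eq_mul] at h2
    linarith
  have hD : ∑ w, (∑ z ∈ Z', Φ w z - a * #Z') ^ 2 ≤ 3 * τ * (b * a ^ 2) * N ^ 2 := by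
    have e : ∑ w, (∑ z ∈ Z', Φ w z - a * #Z') ^ 2
        = ∑ z ∈ Z', ∑ z' ∈ Z', ∑ w, Φ w z * Φ w z'
          - 2 * (a * #Z') * ∑ z ∈ Z', ∑ w, Φ w z + b * (a * #Z') ^ 2 := by
      have e1 : ∑ z ∈ Z', ∑ z' ∈ Z', ∑ w, Φ w z * Φ w z' = ∑ w, (∑ z ∈ Z', Φ w z) ^ 2 := by
        simp_rw [sq, sum_mul_sum]
        simp only [sum_comm (s := univ)]
      have e2 : ∑ z ∈ Z', ∑ w, Φ w z = ∑ w, ∑ z ∈ Z', Φ w z := sum_comm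
      have e3 : b * (a * #Z') ^ 2 = ∑ w : β, (a * #Z') ^ 2 := by simp [hb]
      rw [e1, e2, e3, mul_sum, ← sum_sub_distrib, ← sum_add_distrib]
      exact sum_congr rfl fun w _ => by ring
    rw [e]
    have h3 := mul_le_mul_of_nonneg_left hP (by positivity : 0 ≤ 2 * (a * #Z'))
    have h4 : τ * (b * a ^ 2) * N * #Z' ≤ τ * (b * a ^ 2) * N * N :=
      mul_le_mul_of_nonneg_left hZ' (by positivity)
    nlinarith
  have hcs := Finset.sum_mul_sq_le_sq_mul_sq univ f (fun w => ∑ z ∈ Z', Φ w z - a * #Z')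
  have hf2 : ∑ w, f w ^ 2 ≤ b := by
    refine (sum_le_sum fun w _ => (sq_le_one_iff_abs_le_one _).2 (hf w)).trans ?_
    simp [hb]
  have e : ∑ w, f w * ∑ z ∈ Z', Φ w z - a * #Z' * ∑ w, f w
      = ∑ w, f w * (∑ z ∈ Z', Φ w z - a * #Z') := by
    rw [mul_sum, ← sum_sub_distrib]
    exact sum_congr rfl fun w _ => by ring
  rw [e]
  apply abs_le_of_sq_le_sq _ (by positivity)
  refine hcs.trans ?_
  calc _ ≤ b * (3 * τ * (b * a ^ 2) * N ^ 2) :=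
        mul_le_mul hf2 hD (sum_nonneg fun _ _ => sq_nonneg _) hb0
    _ = _ := by
      simp only [mul_pow]
      rw [Real.sq_sqrt (by positivity)]; ring

/-- Two applications of Cauchy–Schwarz eliminate the functions `e` from a triangle sum in favour of
their majorant `γ`. -/
lemma triangle_sum_pow_four_le {α Z : Type*} (γ e : α → Z → ℝ) (F : α → α → ℝ)
    (he : ∀ u z, 0 ≤ e u z) (heγ : ∀ u z, e u z ≤ γ u z) (U V : Finset α) (Z' : Finset Z) :
    (∑ z ∈ Z', ∑ u ∈ U, ∑ v ∈ V, F u v * e u z * e v z) ^ 4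
      ≤ (∑ z ∈ Z', ∑ u ∈ U, γ u z) ^ 2 * ((∑ z ∈ Z', ∑ v ∈ V, ∑ v' ∈ V, γ v z * γ v' z) *
        ∑ z ∈ Z', ∑ v ∈ V, ∑ v' ∈ V, γ v z * γ v' z *
          (∑ u ∈ U, γ u z * F u v * F u v') ^ 2) := by
  have h1 := weighted_cauchy_schwarz (Z' ×ˢ U) (fun p => e p.2 p.1)
    (fun p => ∑ v ∈ V, F p.2 v * e v p.1) (fun p => γ p.2 p.1)
    (fun _ _ => he _ _) (fun _ _ => heγ _ _)
  simp only [sum_product] at h1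
  have t1 : ∑ z ∈ Z', ∑ u ∈ U, e u z * ∑ v ∈ V, F u v * e v z
      = ∑ z ∈ Z', ∑ u ∈ U, ∑ v ∈ V, F u v * e u z * e v z := by
    simp only [mul_sum]
    exact sum_congr rfl fun z _ => sum_congr rfl fun u _ => sum_congr rfl fun v _ => by ring
  have t2 : ∑ z ∈ Z', ∑ u ∈ U, γ u z * (∑ v ∈ V, F u v * e v z) ^ 2
      = ∑ z ∈ Z', ∑ v ∈ V, ∑ v' ∈ V, (e v z * e v' z) * ∑ u ∈ U, γ u z * F u v * F u v' := by
    refine sum_congr rfl fun z _ => ?_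
    simp_rw [sq, sum_mul_sum, mul_sum]
    rw [sum_comm]
    refine sum_congr rfl fun v _ => ?_
    rw [sum_comm]
    exact sum_congr rfl fun v' _ => sum_congr rfl fun u _ => by ring
  have h2 := weighted_cauchy_schwarz (Z' ×ˢ (V ×ˢ V)) (fun p => e p.2.1 p.1 * e p.2.2 p.1)
    (fun p => ∑ u ∈ U, γ u p.1 * F u p.2.1 * F u p.2.2) (fun p => γ p.2.1 p.1 * γ p.2.2 p.1)
    (fun _ _ => mul_nonneg (he _ _) (he _ _))
    (fun _ _ => mul_le_mul (heγ _ _) (heγ _ _) (he _ _) ((he _ _).trans (heγ _ _)))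
  simp only [sum_product] at h2
  rw [t1, t2] at h1
  have h3 := pow_le_pow_left₀ (sq_nonneg _) h1 2
  rw [mul_pow, ← pow_mul] at h3
  exact h3.trans (mul_le_mul_of_nonneg_left h2 (sq_nonneg _))

/-! ### Uniform pairs have small box norm -/

section Box
variable {α : Type*} (G : SimpleGraph α) [DecidableRel G.Adj]

/-- The deviation of the adjacency function of `G` from the constant `d`. -/
def edgeDev (d : ℝ) (u v : α) : ℝ := (if G.Adj u v then 1 else 0) - d

variable {G}

lemma abs_edgeDev_le {d : ℝ} (h0 : 0 ≤ d) (h1 : d ≤ 1) (u v : α) : |edgeDev G d u v| ≤ 1 := by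
  unfold edgeDev
  split_ifs <;> rw [abs_le] <;> constructor <;> linarith

lemma sum_adj_eq (U V : Finset α) :
    ∑ u ∈ U, ∑ v ∈ V, (if G.Adj u v then (1 : ℝ) else 0)
      = (G.edgeDensity U V : ℝ) * (#U * #V) := by
  have : ∑ u ∈ U, ∑ v ∈ V, (if G.Adj u v then (1 : ℝ) else 0) = #(G.interedges U V) := by
    rw [SimpleGraph.interedges, Rel.interedges, ← sum_product', ← sum_filter]
    simp
  rw [this, ← SimpleGraph.card_interedges_div_card]
  push_cast
  by_cases hU : (#U : ℝ) * #V = 0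
  · rw [hU, mul_zero]
    have := G.card_interedges_le_mul U V
    have h2 : ((#(G.interedges U V) : ℕ) : ℝ) ≤ #U * #V := by exact_mod_cast this
    exact le_antisymm (by linarith) (by positivity)
  · rw [div_mul_cancel₀ _ hU]

/-- Uniformity as a cut-norm bound; subsets below the size threshold of `IsUniform` are handled
trivially. -/
lemma abs_sum_edgeDev_le {ε : ℝ} {U V U' V' : Finset α} (hε : 0 ≤ ε)
    (hunif : G.IsUniform ε U V) (hU : U' ⊆ U) (hV : V' ⊆ V) :
    |∑ u ∈ U', ∑ v ∈ V', edgeDev G (G.edgeDensity U V) u v| ≤ ε * (#U * #V) := by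
  have d0 : (0 : ℝ) ≤ G.edgeDensity U V := by exact_mod_cast G.edgeDensity_nonneg U V
  have d1 : (G.edgeDensity U V : ℝ) ≤ 1 := by exact_mod_cast G.edgeDensity_le_one U V
  have cU : (#U' : ℝ) ≤ #U := by exact_mod_cast card_le_card hU
  have cV : (#V' : ℝ) ≤ #V := by exact_mod_cast card_le_card hV
  have triv : |∑ u ∈ U', ∑ v ∈ V', edgeDev G (G.edgeDensity U V) u v| ≤ #U' * #V' := by
    refine (abs_sum_le_sum_abs _ _).trans ?_
    refine (sum_le_sum fun u _ => (abs_sum_le_sum_abs _ _).trans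
      (sum_le_sum fun v _ => abs_edgeDev_le d0 d1 u v)).trans ?_
    simp
  by_cases h1 : (#U : ℝ) * ε ≤ #U'
  swap
  · refine triv.trans ?_
    calc (#U' : ℝ) * #V' ≤ (#U * ε) * #V := by gcongr; exact (not_le.1 h1).le
      _ = _ := by ring
  by_cases h2 : (#V : ℝ) * ε ≤ #V'
  swap
  · refine triv.trans ?_
    calc (#U' : ℝ) * #V' ≤ #U * (#V * ε) := by gcongr; exact (not_le.1 h2).le
      _ = _ := by ring
  have h := hunif hU hV h1 h2
  have e : ∑ u ∈ U', ∑ v ∈ V', edgeDev G (G.edgeDensity U V) u v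
      = ((G.edgeDensity U' V' : ℝ) - G.edgeDensity U V) * (#U' * #V') := by
    simp only [edgeDev, sum_sub_distrib, sum_adj_eq, sum_const, nsmul_eq_mul]
    ring
  rw [e, abs_mul, abs_of_nonneg (by positivity : (0 : ℝ) ≤ #U' * #V')]
  gcongr

/-- For fixed `u', v'` the box sum is a combination of four cut sums of `F` over subsets of `U` and
`V`, each of which is controlled by uniformity. -/
lemma sum_edgeDev_box_le {ε : ℝ} {U V : Finset α} (hε : 0 ≤ ε) (hunif : G.IsUniform ε U V)
    (F : α → α → ℝ) (hF : F = edgeDev G (G.edgeDensity U V)) :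
    ∑ v ∈ V, ∑ v' ∈ V, ∑ u ∈ U, ∑ u' ∈ U, F u v * F u v' * (F u' v * F u' v')
      ≤ 4 * ε * (#U * #V) ^ 2 := by
  have d0 : (0 : ℝ) ≤ G.edgeDensity U V := by exact_mod_cast G.edgeDensity_nonneg U V
  have d1 : (G.edgeDensity U V : ℝ) ≤ 1 := by exact_mod_cast G.edgeDensity_le_one U V
  have key : ∀ u' v', |∑ u ∈ U, ∑ v ∈ V, F u v * F u v' * F u' v| ≤ 4 * ε * (#U * #V) := by
    intro u' v'
    set d : ℝ := (G.edgeDensity U V : ℝ)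
    set U' := U.filter fun u => G.Adj u v'
    set V' := V.filter fun v => G.Adj u' v
    have e : ∑ u ∈ U, ∑ v ∈ V, F u v * F u v' * F u' v
        = (∑ u ∈ U', ∑ v ∈ V', F u v) - d * (∑ u ∈ U', ∑ v ∈ V, F u v)
          - d * (∑ u ∈ U, ∑ v ∈ V', F u v) + d * d * (∑ u ∈ U, ∑ v ∈ V, F u v) := by
      simp only [U', V', sum_filter, mul_sum, ← sum_sub_distrib, ← sum_add_distrib]
      refine sum_congr rfl fun u _ => ?_
      have hu : F u v' = (if G.Adj u v' then 1 else 0) - d := by rw [hF]; rfl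
      have hv : ∀ v, F u' v = (if G.Adj u' v then 1 else 0) - d := by intro v; rw [hF]; rfl
      simp only [hu, hv]
      split_ifs with h
      · simp only [mul_sum, ← sum_sub_distrib, ← sum_add_distrib]
        refine sum_congr rfl fun v _ => ?_
        split_ifs <;> ring
      · simp only [mul_zero, sub_zero, zero_sub, ← sum_neg_distrib, ← sum_add_distrib]
        refine sum_congr rfl fun v _ => ?_
        split_ifs <;> ring
    have b1 := abs_le.1 <| abs_sum_edgeDev_le hε hunif (filter_subset _ U : U' ⊆ U)
      (filter_subset _ V : V' ⊆ V)
    have b2 := abs_le.1 <| abs_sum_edgeDev_le hε hunif (filter_subset _ U : U' ⊆ U) (subset_refl V)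
    have b3 := abs_le.1 <| abs_sum_edgeDev_le hε hunif (subset_refl U) (filter_subset _ V : V' ⊆ V)
    have b4 := abs_le.1 <| abs_sum_edgeDev_le hε hunif (subset_refl U) (subset_refl V)
    rw [← hF] at b1 b2 b3 b4
    have hB : 0 ≤ ε * (#U * #V) := by positivity
    have m : ∀ (c x : ℝ), 0 ≤ c → c ≤ 1 → (-(ε * (#U * #V)) ≤ x ∧ x ≤ ε * (#U * #V)) →
        (-(ε * (#U * #V)) ≤ c * x ∧ c * x ≤ ε * (#U * #V)) := by
      rintro c x h0 h1 ⟨h2, h3⟩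
      constructor <;> nlinarith
    have c2 := m d _ d0 d1 b2
    have c3 := m d _ d0 d1 b3
    have c4 := m (d * d) _ (by positivity) (by nlinarith) b4
    rw [e, abs_le]
    constructor <;> linarith
  have e : ∑ v ∈ V, ∑ v' ∈ V, ∑ u ∈ U, ∑ u' ∈ U, F u v * F u v' * (F u' v * F u' v')
      = ∑ v' ∈ V, ∑ u' ∈ U, F u' v' * ∑ u ∈ U, ∑ v ∈ V, F u v * F u v' * F u' v := by
    rw [sum_comm]
    refine sum_congr rfl fun v' _ => ?_
    simp only [mul_sum]
    rw [sum_comm]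
    rw [sum_comm (s := U) (t := U)]
    refine sum_congr rfl fun u _ => ?_
    rw [sum_comm]
    refine sum_congr rfl fun u' _ => sum_congr rfl fun v _ => by ring
  rw [e]
  calc _ ≤ ∑ v' ∈ V, ∑ u' ∈ U, (4 * ε * (#U * #V) : ℝ) := by
        refine sum_le_sum fun v' _ => sum_le_sum fun u' _ => ?_
        refine (le_abs_self _).trans ?_
        rw [abs_mul]
        have h1 : |F u' v'| ≤ 1 := by rw [hF]; exact abs_edgeDev_le d0 d1 _ _
        calc _ ≤ 1 * (4 * ε * (#U * #V) : ℝ) :=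
              mul_le_mul h1 (key u' v') (abs_nonneg _) zero_le_one
          _ = _ := one_mul _
    _ = _ := by simp only [sum_const, nsmul_eq_mul]; ring

end Box

/-! ### Counting triangles over a uniform pair -/

/-- The form of `replace_kernel_by_const` for sums over a finset. -/
lemma replace_kernel_by_const_on {β Z : Type*} [Fintype β] [Fintype Z] (Φ : β → Z → ℝ)
    (a τ : ℝ) (ha : 0 ≤ a) (hτ : 0 ≤ τ)
    (hq : ∑ z, ∑ z', |∑ w, Φ w z * Φ w z' - Fintype.card β * a ^ 2|
      ≤ τ * (Fintype.card β * a ^ 2) * (Fintype.card Z) ^ 2)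
    (hp : ∑ z, |∑ w, Φ w z - Fintype.card β * a| ≤ τ * (Fintype.card β * a) * Fintype.card Z)
    (B : Finset β) (f : β → ℝ) (hf : ∀ w, |f w| ≤ 1) (Z' : Finset Z) :
    ∑ w ∈ B, f w * ∑ z ∈ Z', Φ w z
      ≤ a * #Z' * ∑ w ∈ B, f w + √(3 * τ) * a * Fintype.card β * Fintype.card Z := by
  classical
  have h := replace_kernel_by_const Φ a τ ha hτ hq hp (fun w => if w ∈ B then f w else 0)
    (fun w => by split_ifs; exacts [hf w, by simp]) Z'
  simp only [ite_mul, zero_mul, sum_ite_mem, univ_inter] at h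
  linarith [(abs_le.1 h).2]

/-- The kernel `γ` has, for typical `z` and typical pairs `(z, z')`, about as many neighbours and
common neighbours as a random kernel of density `θ` would; `τ` measures the average
deviation, for fourth powers of these numbers. -/
structure IsTypicalKernel {α Z : Type*} [Fintype α] [Fintype Z] (γ : α → Z → ℝ) (θ τ : ℝ) :
    Prop where
  nonneg : ∀ u z, 0 ≤ γ u z
  pair : ∑ z, ∑ z', |(∑ u, γ u z * γ u z') ^ 4 - (Fintype.card α * θ ^ 2) ^ 4|
    ≤ τ * (Fintype.card α * θ ^ 2) ^ 4 * (Fintype.card Z) ^ 2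
  single : ∑ z, |(∑ u, γ u z) ^ 4 - (Fintype.card α * θ) ^ 4|
    ≤ τ * (Fintype.card α * θ) ^ 4 * Fintype.card Z

lemma abs_sub_mul_pow_le {x c : ℝ} (hx : 0 ≤ x) (hc : 0 ≤ c) :
    |x - c| * c ^ 3 ≤ |x ^ 4 - c ^ 4| := by
  have : x ^ 4 - c ^ 4 = (x - c) * (c ^ 3 + x * c ^ 2 + x ^ 2 * c + x ^ 3) := by ring
  rw [this, abs_mul, abs_of_nonneg (by positivity : 0 ≤ c ^ 3 + x * c ^ 2 + x ^ 2 * c + x ^ 3)]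
  gcongr
  have : 0 ≤ x * c ^ 2 + x ^ 2 * c + x ^ 3 := by positivity
  linarith

lemma abs_sq_sub_sq_mul_le {x c : ℝ} :
    |x ^ 2 - c ^ 2| * c ^ 2 ≤ |x ^ 4 - c ^ 4| := by
  have : x ^ 4 - c ^ 4 = (x ^ 2 - c ^ 2) * (x ^ 2 + c ^ 2) := by ring
  rw [this, abs_mul, abs_of_nonneg (by positivity : 0 ≤ x ^ 2 + c ^ 2)]
  gcongr
  linarith [sq_nonneg x]

namespace IsTypicalKernel
variable {α Z : Type*} [Fintype α] [Fintype Z] {γ : α → Z → ℝ} {θ τ : ℝ}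

lemma sum_one_le [Nonempty α] (h : IsTypicalKernel γ θ τ) (hθ : 0 < θ) (hτ : 0 ≤ τ)
    (U : Finset α) (Z' : Finset Z) :
    ∑ z ∈ Z', ∑ u ∈ U, γ u z
      ≤ θ * #Z' * #U + √(3 * τ) * θ * Fintype.card α * Fintype.card Z := by
  set m : ℝ := (Fintype.card α : ℝ) with hm
  have hm0 : 0 < m := by rw [hm]; exact_mod_cast Fintype.card_pos
  have h1 := replace_kernel_by_const_on γ θ τ hθ.le hτ ?_ ?_ U (fun _ => 1) (by simp) Z'
  · simp only [one_mul, sum_const, nsmul_eq_mul, mul_one] at h1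
    rwa [sum_comm] at h1
  · refine le_of_mul_le_mul_right ?_ (by positivity : 0 < (m * θ ^ 2) ^ 3)
    calc _ ≤ _ := by
          rw [sum_mul]
          simp only [sum_mul]
          exact sum_le_sum fun z _ => sum_le_sum fun z' _ => abs_sub_mul_pow_le
            (sum_nonneg fun u _ => mul_nonneg (h.nonneg _ _) (h.nonneg _ _)) (by positivity)
      _ ≤ _ := h.pair
      _ = _ := by ring
  · refine le_of_mul_le_mul_right ?_ (by positivity : 0 < (m * θ) ^ 3)
    calc _ ≤ _ := by
          rw [sum_mul]
          exact sum_le_sum fun z _ => abs_sub_mul_pow_le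
            (sum_nonneg fun u _ => h.nonneg _ _) (by positivity)
      _ ≤ _ := h.single
      _ = _ := by ring

lemma sum_two_le [Nonempty α] (h : IsTypicalKernel γ θ τ) (hθ : 0 < θ) (hτ : 0 ≤ τ)
    (V : Finset α) (Z' : Finset Z) :
    ∑ z ∈ Z', ∑ v ∈ V, ∑ v' ∈ V, γ v z * γ v' z
      ≤ θ ^ 2 * #Z' * (#V) ^ 2
        + √(3 * τ) * θ ^ 2 * (Fintype.card α : ℝ) ^ 2 * Fintype.card Z := by
  have hm0 : (0 : ℝ) < Fintype.card α := by exact_mod_cast Fintype.card_pos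
  have e1 : ∀ z, ∑ w : α × α, γ w.1 z * γ w.2 z = (∑ u, γ u z) ^ 2 := fun z => by
    rw [sq, sum_mul_sum, Fintype.sum_prod_type]
  have e2 : ∀ z z', ∑ w : α × α, γ w.1 z * γ w.2 z * (γ w.1 z' * γ w.2 z')
      = (∑ u, γ u z * γ u z') ^ 2 := fun z z' => by
    rw [sq, sum_mul_sum, Fintype.sum_prod_type]
    exact sum_congr rfl fun _ _ => sum_congr rfl fun _ _ => by ring
  have h1 := replace_kernel_by_const_on (fun (w : α × α) z => γ w.1 z * γ w.2 z) (θ ^ 2) τ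
    (by positivity) hτ ?_ ?_ (V ×ˢ V) (fun _ => 1) (by simp) Z'
  · simp only [one_mul, sum_const, nsmul_eq_mul, mul_one, card_product, Fintype.card_prod,
      Nat.cast_mul] at h1
    rw [sum_comm] at h1
    simp only [sum_product] at h1
    simp only [sq] at h1 ⊢
    exact h1
  · simp only [e2, Fintype.card_prod, Nat.cast_mul]
    set m : ℝ := (Fintype.card α : ℝ)
    refine le_of_mul_le_mul_right ?_ (by positivity : 0 < (m * θ ^ 2) ^ 2)
    calc _ ≤ _ := by
          rw [sum_mul]
          simp only [sum_mul]
          refine sum_le_sum fun z _ => sum_le_sum fun z' _ => le_trans (le_of_eq ?_)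
            (abs_sq_sub_sq_mul_le (c := m * θ ^ 2))
          ring_nf
      _ ≤ _ := h.pair
      _ = _ := by ring
  · simp only [e1, Fintype.card_prod, Nat.cast_mul]
    set m : ℝ := (Fintype.card α : ℝ)
    refine le_of_mul_le_mul_right ?_ (by positivity : 0 < (m * θ) ^ 2)
    calc _ ≤ _ := by
          rw [sum_mul]
          refine sum_le_sum fun z _ => le_trans (le_of_eq ?_)
            (abs_sq_sub_sq_mul_le (c := m * θ))
          ring_nf
      _ ≤ _ := h.single
      _ = _ := by ring

lemma sum_four_le (h : IsTypicalKernel γ θ τ) (hθ : 0 < θ) (hτ : 0 ≤ τ)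
    (F : α → α → ℝ) (hF : ∀ u v, |F u v| ≤ 1) (U V : Finset α) (Z' : Finset Z) :
    ∑ z ∈ Z', ∑ v ∈ V, ∑ v' ∈ V, γ v z * γ v' z * (∑ u ∈ U, γ u z * F u v * F u v') ^ 2
      ≤ θ ^ 4 * #Z' *
          ∑ v ∈ V, ∑ v' ∈ V, ∑ u ∈ U, ∑ u' ∈ U, F u v * F u v' * (F u' v * F u' v')
        + √(3 * τ) * θ ^ 4 * (Fintype.card α : ℝ) ^ 4 * Fintype.card Z := by
  have e1 : ∀ z, ∑ w : (α × α) × (α × α), γ w.1.1 z * γ w.1.2 z * (γ w.2.1 z * γ w.2.2 z)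
      = (∑ u, γ u z) ^ 4 := fun z => by
    have e : ∑ w : α × α, γ w.1 z * γ w.2 z = (∑ u, γ u z) ^ 2 := by
      rw [sq, sum_mul_sum, Fintype.sum_prod_type]
    rw [Fintype.sum_prod_type, ← sum_mul_sum univ univ (fun w : α × α => γ w.1 z * γ w.2 z)
      (fun w : α × α => γ w.1 z * γ w.2 z), e]
    ring
  have e2 : ∀ z z', ∑ w : (α × α) × (α × α), γ w.1.1 z * γ w.1.2 z * (γ w.2.1 z * γ w.2.2 z) *
      (γ w.1.1 z' * γ w.1.2 z' * (γ w.2.1 z' * γ w.2.2 z'))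
      = (∑ u, γ u z * γ u z') ^ 4 := fun z z' => by
    have e : ∑ w : α × α, γ w.1 z * γ w.2 z * (γ w.1 z' * γ w.2 z')
        = (∑ u, γ u z * γ u z') ^ 2 := by
      rw [sq, sum_mul_sum, Fintype.sum_prod_type]
      exact sum_congr rfl fun _ _ => sum_congr rfl fun _ _ => by ring
    have : (∑ u, γ u z * γ u z') ^ 4
        = (∑ u, γ u z * γ u z') ^ 2 * (∑ u, γ u z * γ u z') ^ 2 := by ring
    rw [this, ← e, sum_mul_sum, Fintype.sum_prod_type]
    exact sum_congr rfl fun _ _ => sum_congr rfl fun _ _ => by ring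
  have h1 := replace_kernel_by_const_on
    (fun (w : (α × α) × (α × α)) z => γ w.1.1 z * γ w.1.2 z * (γ w.2.1 z * γ w.2.2 z)) (θ ^ 4) τ
    (by positivity) hτ ?_ ?_ ((V ×ˢ V) ×ˢ (U ×ˢ U))
    (fun w => F w.2.1 w.1.1 * F w.2.1 w.1.2 * (F w.2.2 w.1.1 * F w.2.2 w.1.2)) ?_ Z'
  · simp only [mul_sum] at h1
    rw [sum_comm] at h1
    simp only [sum_product, Fintype.card_prod, Nat.cast_mul] at h1
    refine le_trans (le_of_eq ?_) (h1.trans (le_of_eq ?_))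
    · refine sum_congr rfl fun z _ => sum_congr rfl fun v _ => sum_congr rfl fun v' _ => ?_
      rw [sq, sum_mul_sum, mul_sum]
      refine sum_congr rfl fun u _ => ?_
      rw [mul_sum]
      exact sum_congr rfl fun u' _ => by ring
    · simp only [mul_sum]
      ring
  · simp only [e2, Fintype.card_prod, Nat.cast_mul]
    convert h.pair using 1
    · refine sum_congr rfl fun z _ => sum_congr rfl fun z' _ => ?_
      ring_nf
    · ring
  · simp only [e1, Fintype.card_prod, Nat.cast_mul]
    convert h.single using 1
    · refine sum_congr rfl fun z _ => ?_
      ring_nf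
    · ring
  · intro w
    simp only [abs_mul]
    exact mul_le_one₀ (mul_le_one₀ (hF _ _) (abs_nonneg _) (hF _ _)) (by positivity)
      (mul_le_one₀ (hF _ _) (abs_nonneg _) (hF _ _))

end IsTypicalKernel

/-- Sparse counting over a uniform pair `(U, V)`: if the third vertex lies in a set
`Z'` that is not too small, the adjacency function can be replaced by the density of the pair up
to a small error, since two Cauchy–Schwarz steps bound the error by the box norm of `F`. -/
lemma uniform_pair_count {α Z : Type*} [Fintype α] [Fintype Z] [Nonempty α]
    {G : SimpleGraph α} [DecidableRel G.Adj]
    {γ e : α → Z → ℝ} {θ τ ε κ ρ : ℝ} (h : IsTypicalKernel γ θ τ) (hθ : 0 < θ) (hτ : 0 ≤ τ)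
    (he : ∀ u z, 0 ≤ e u z) (heγ : ∀ u z, e u z ≤ γ u z)
    (hε : 0 ≤ ε) (hε1 : ε ≤ 1) (hκ : 0 ≤ κ) (hκ1 : κ ≤ 1)
    {U V : Finset α} (hU : κ * Fintype.card α ≤ #U) (hV : κ * Fintype.card α ≤ #V)
    {Z' : Finset Z} (hZ' : ρ * Fintype.card Z ≤ #Z') (hτε : √(3 * τ) ≤ ε * ρ * κ ^ 4)
    (hunif : G.IsUniform ε U V) (F : α → α → ℝ) (hF : F = edgeDev G (G.edgeDensity U V)) :
    (∑ z ∈ Z', ∑ u ∈ U, ∑ v ∈ V, F u v * e u z * e v z) ^ 4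
      ≤ 40 * ε * (θ ^ 2 * #Z' * (#U * #V)) ^ 4 := by
  have d0 : (0 : ℝ) ≤ G.edgeDensity U V := by exact_mod_cast G.edgeDensity_nonneg U V
  have d1 : (G.edgeDensity U V : ℝ) ≤ 1 := by exact_mod_cast G.edgeDensity_le_one U V
  have hF1 : ∀ u v, |F u v| ≤ 1 := fun u v => by rw [hF]; exact abs_edgeDev_le d0 d1 u v
  have c1 := h.sum_one_le hθ hτ U Z'
  have c2 := h.sum_two_le hθ hτ V Z'
  have c4 := h.sum_four_le hθ hτ F hF1 U V Z'
  have hbox := sum_edgeDev_box_le hε hunif F hF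
  set m : ℝ := (Fintype.card α : ℝ) with hm
  set N : ℝ := (Fintype.card Z : ℝ) with hN
  have hm0 : 0 < m := by rw [hm]; exact_mod_cast Fintype.card_pos
  have hN0 : 0 ≤ N := by positivity
  set x : ℝ := (#U : ℝ)
  set y : ℝ := (#V : ℝ)
  set t : ℝ := (#Z' : ℝ)
  have hx0 : 0 ≤ x := by positivity
  have hy0 : 0 ≤ y := by positivity
  have ht0 : 0 ≤ t := by positivity
  have hσ : √(3 * τ) * N ≤ ε * t * κ ^ 4 := by
    calc _ ≤ ε * ρ * κ ^ 4 * N := by gcongr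
      _ = ε * (ρ * N) * κ ^ 4 := by ring
      _ ≤ _ := by gcongr
  have k1 : κ ^ 4 ≤ κ := pow_le_of_le_one hκ hκ1 (by norm_num)
  have k2 : κ ^ 4 ≤ κ ^ 2 := pow_le_pow_of_le_one hκ hκ1 (by norm_num)
  have hκm : 0 ≤ κ * m := by positivity
  have C1 : ∑ z ∈ Z', ∑ u ∈ U, γ u z ≤ 2 * (θ * t * x) := by
    have : √(3 * τ) * θ * m * N ≤ θ * t * x := by
      calc _ = θ * m * (√(3 * τ) * N) := by ring
        _ ≤ θ * m * (ε * t * κ ^ 4) := by gcongr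
        _ ≤ θ * m * (1 * t * κ) := by gcongr
        _ = θ * t * (κ * m) := by ring
        _ ≤ _ := by gcongr
    linarith
  have C2 : ∑ z ∈ Z', ∑ v ∈ V, ∑ v' ∈ V, γ v z * γ v' z ≤ 2 * (θ ^ 2 * t * y ^ 2) := by
    have : √(3 * τ) * θ ^ 2 * m ^ 2 * N ≤ θ ^ 2 * t * y ^ 2 := by
      calc _ = θ ^ 2 * m ^ 2 * (√(3 * τ) * N) := by ring
        _ ≤ θ ^ 2 * m ^ 2 * (ε * t * κ ^ 4) := by gcongr
        _ ≤ θ ^ 2 * m ^ 2 * (1 * t * κ ^ 2) := by gcongr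
        _ = θ ^ 2 * t * (κ * m) ^ 2 := by ring
        _ ≤ _ := by gcongr
    linarith
  have C4 : ∑ z ∈ Z', ∑ v ∈ V, ∑ v' ∈ V, γ v z * γ v' z *
      (∑ u ∈ U, γ u z * F u v * F u v') ^ 2 ≤ 5 * ε * (θ ^ 4 * t * (x * y) ^ 2) := by
    have a1 : √(3 * τ) * θ ^ 4 * m ^ 4 * N ≤ ε * (θ ^ 4 * t * (x * y) ^ 2) := by
      calc _ = θ ^ 4 * m ^ 4 * (√(3 * τ) * N) := by ring
        _ ≤ θ ^ 4 * m ^ 4 * (ε * t * κ ^ 4) := by gcongr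
        _ = ε * (θ ^ 4 * t * ((κ * m) * (κ * m)) ^ 2) := by ring
        _ ≤ _ := by gcongr
    have a2 := mul_le_mul_of_nonneg_left hbox (by positivity : 0 ≤ θ ^ 4 * t)
    linarith
  refine (triangle_sum_pow_four_le γ e F he heγ U V Z').trans ?_
  have n1 : 0 ≤ ∑ z ∈ Z', ∑ u ∈ U, γ u z :=
    sum_nonneg fun z _ => sum_nonneg fun u _ => h.nonneg _ _
  have n2 : 0 ≤ ∑ z ∈ Z', ∑ v ∈ V, ∑ v' ∈ V, γ v z * γ v' z :=
    sum_nonneg fun z _ => sum_nonneg fun u _ => sum_nonneg fun u _ =>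
      mul_nonneg (h.nonneg _ _) (h.nonneg _ _)
  have n4 : 0 ≤ ∑ z ∈ Z', ∑ v ∈ V, ∑ v' ∈ V, γ v z * γ v' z *
      (∑ u ∈ U, γ u z * F u v * F u v') ^ 2 :=
    sum_nonneg fun z _ => sum_nonneg fun u _ => sum_nonneg fun u _ =>
      mul_nonneg (mul_nonneg (h.nonneg _ _) (h.nonneg _ _)) (sq_nonneg _)
  calc _ ≤ (2 * (θ * t * x)) ^ 2 * (2 * (θ ^ 2 * t * y ^ 2) *
        (5 * ε * (θ ^ 4 * t * (x * y) ^ 2))) :=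
        mul_le_mul (pow_le_pow_left₀ n1 C1 2) (mul_le_mul C2 C4 n4 (by positivity))
          (mul_nonneg n2 n4) (by positivity)
    _ = _ := by ring

/-! ### Removal with two sparse sides -/

section Removal
variable {α Z : Type}

open Classical in
/-- The number of `u ∈ U` joined to `z` by the relation `e`. -/
noncomputable def degIn (e : α → Z → Prop) (U : Finset α) (z : Z) : ℝ := #(U.filter fun u => e u z)

open Classical in
lemma degIn_eq_sum (e : α → Z → Prop) (U : Finset α) (z : Z) :
    degIn e U z = ∑ u ∈ U, if e u z then (1 : ℝ) else 0 := by
  simp [degIn]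

variable [Fintype α] [Fintype Z]

open Classical in
/-- Edges `(u, v)` for which the part of `u` contains few `e`-neighbours of `s u v` are rare,
because `(u, v)` is determined by `u` and `s u v`. -/
lemma card_light_le [DecidableEq α] (G : SimpleGraph α) (P : Finpartition (univ : Finset α))
    (e : α → Z → Prop) (s : α → α → Z) (b : ℝ) (hb : 0 ≤ b)
    (hs : ∀ u v, G.Adj u v → e u (s u v))
    (hinj : ∀ u v v', G.Adj u v → G.Adj u v' → s u v = s u v' → v = v') :
    (#(univ.filter fun p : α × α => G.Adj p.1 p.2 ∧
      degIn e (P.part p.1) (s p.1 p.2) < b * #(P.part p.1)) : ℝ)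
      ≤ b * Fintype.card α * Fintype.card Z := by
  set L := univ.filter fun p : α × α => G.Adj p.1 p.2 ∧
      degIn e (P.part p.1) (s p.1 p.2) < b * #(P.part p.1) with hL
  let T : Z → Finset α := fun z =>
    (P.parts.filter fun U => degIn e U z < b * #U).biUnion fun U => U.filter fun u => e u z
  have h1 : #L ≤ #(univ.sigma T) := by
    refine card_le_card_of_injOn (fun p => ⟨s p.1 p.2, p.1⟩) ?_ ?_
    · rintro ⟨u, v⟩ hp
      simp only [hL, coe_filter, mem_univ, true_and, Set.mem_ofPred_eq] at hp
      simp only [coe_sigma, Set.mem_sigma_iff, coe_univ, Set.mem_univ, true_and, T, mem_coe,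
        mem_biUnion, mem_filter]
      exact ⟨P.part u, ⟨P.part_mem.2 (mem_univ _), hp.2⟩, P.mem_part (mem_univ _), hs _ _ hp.1⟩
    · rintro ⟨u, v⟩ hp ⟨u', v'⟩ hp' h
      simp only [hL, coe_filter, mem_univ, true_and, Set.mem_ofPred_eq] at hp hp'
      simp only [Sigma.mk.injEq, heq_eq_eq] at h
      obtain ⟨h2, rfl⟩ := h
      rw [hinj _ _ _ hp.1 hp'.1 h2]
  have h2 : ∀ z, (#(T z) : ℝ) ≤ b * Fintype.card α := by
    intro z
    calc (#(T z) : ℝ) ≤ ∑ U ∈ P.parts.filter (fun U => degIn e U z < b * #U),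
          (#(U.filter fun u => e u z) : ℝ) := by exact_mod_cast card_biUnion_le
      _ ≤ ∑ U ∈ P.parts.filter (fun U => degIn e U z < b * #U), b * (#U : ℝ) :=
          sum_le_sum fun U hU => (mem_filter.1 hU).2.le
      _ ≤ ∑ U ∈ P.parts, b * (#U : ℝ) :=
          sum_le_sum_of_subset_of_nonneg (filter_subset _ _) fun _ _ _ => by positivity
      _ = b * Fintype.card α := by
          rw [← mul_sum, ← card_univ, ← P.sum_card_parts]; push_cast; rfl
  calc (#L : ℝ) ≤ #(univ.sigma T) := by exact_mod_cast h1
    _ = ∑ z, (#(T z) : ℝ) := by rw [card_sigma]; push_cast; rfl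
    _ ≤ ∑ z : Z, b * Fintype.card α := sum_le_sum fun z _ => h2 z
    _ = _ := by simp; ring

open Classical in
/-- If every edge `uv` of `G` lies in at most one triangle `u, v, z` with `e u z` and `e v z`, then
there cannot be many such triangles over a dense uniform pair, hence a large set of vertices `z`
cannot have large degree into both sides of the pair. -/
lemma no_heavy_uniform_pair [Nonempty α] {G : SimpleGraph α} [DecidableRel G.Adj]
    {γ : α → Z → ℝ} {e : α → Z → Prop} {s : α → α → Z} {θ τ ε κ ρ d₀ b : ℝ}
    (h : IsTypicalKernel γ θ τ) (hθ : 0 < θ) (hτ : 0 ≤ τ)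
    (heγ : ∀ u z, e u z → 1 ≤ γ u z)
    (huniq : ∀ u v z, G.Adj u v → e u z → e v z → z = s u v)
    (hε : 0 ≤ ε) (hε1 : ε ≤ 1) (hκ : 0 < κ) (hκ1 : κ ≤ 1) (hd₀ : 0 ≤ d₀) (hb : 0 ≤ b)
    (hεd : 40 * ε ≤ (d₀ * b ^ 2 / 2) ^ 4)
    {U V : Finset α} (hU : κ * Fintype.card α ≤ #U) (hV : κ * Fintype.card α ≤ #V)
    (hdens : d₀ ≤ G.edgeDensity U V)
    {Z' : Finset Z} (hZ' : ρ * Fintype.card Z ≤ #Z') (hτε : √(3 * τ) ≤ ε * ρ * κ ^ 4)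
    (hheavyU : ∀ z ∈ Z', b * θ * #U ≤ degIn e U z) (hheavyV : ∀ z ∈ Z', b * θ * #V ≤ degIn e V z)
    (hunif : G.IsUniform ε U V) :
    d₀ * b ^ 2 / 2 * ρ * (θ ^ 2 * Fintype.card Z) ≤ 1 := by
  have hm0 : (0 : ℝ) < Fintype.card α := by exact_mod_cast Fintype.card_pos
  have hx0 : (0 : ℝ) < #U := lt_of_lt_of_le (by positivity) hU
  have hy0 : (0 : ℝ) < #V := lt_of_lt_of_le (by positivity) hV
  set d : ℝ := (G.edgeDensity U V : ℝ) with hd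
  set f : α → Z → ℝ := fun u z => if e u z then 1 else 0 with hf
  have f0 : ∀ u z, 0 ≤ f u z := fun u z => by simp only [hf]; split_ifs <;> norm_num
  have f1 : ∀ u z, f u z ≤ γ u z := fun u z => by
    simp only [hf]; split_ifs with h1; exacts [heγ _ _ h1, h.nonneg _ _]
  have hcount := uniform_pair_count h hθ hτ f0 f1 hε hε1 hκ.le hκ1 hU hV hZ' hτε hunif _ rfl
  set TF := ∑ z ∈ Z', ∑ u ∈ U, ∑ v ∈ V, edgeDev G d u v * f u z * f v z with hTF
  have hTFle : |TF| ≤ d₀ * b ^ 2 / 2 * (θ ^ 2 * #Z' * (#U * #V)) := by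
    rw [← pow_le_pow_iff_left₀ (abs_nonneg _) (by positivity) (by norm_num : (4 : ℕ) ≠ 0),
      Even.pow_abs (by decide), mul_pow]
    exact hcount.trans (mul_le_mul_of_nonneg_right hεd (by positivity))
  -- every pair `(u, v)` is contained in at most one triangle
  have hupper : ∑ z ∈ Z', ∑ u ∈ U, ∑ v ∈ V, (if G.Adj u v then (1 : ℝ) else 0) * f u z * f v z
      ≤ #U * #V := by
    rw [sum_comm]
    calc _ ≤ ∑ u ∈ U, ∑ v ∈ V, (1 : ℝ) := by
          refine sum_le_sum fun u _ => ?_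
          rw [sum_comm]
          refine sum_le_sum fun v _ => ?_
          calc _ ≤ ∑ z ∈ Z', if z = s u v then (1 : ℝ) else 0 := by
                refine sum_le_sum fun z _ => ?_
                simp only [hf]
                by_cases h1 : G.Adj u v <;> by_cases h2 : e u z <;> by_cases h3 : e v z <;>
                  simp only [h1, h2, h3, if_true, if_false, mul_zero, mul_one]
                · rw [if_pos (huniq u v z h1 h2 h3)]
                all_goals split_ifs <;> norm_num
            _ ≤ 1 := by
                rw [sum_ite_eq']; split_ifs <;> norm_num
      _ = _ := by simp
  have hsplit : ∑ z ∈ Z', ∑ u ∈ U, ∑ v ∈ V, (if G.Adj u v then (1 : ℝ) else 0) * f u z * f v z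
      = d * ∑ z ∈ Z', degIn e U z * degIn e V z + TF := by
    rw [hTF, mul_sum, ← sum_add_distrib]
    refine sum_congr rfl fun z _ => ?_
    rw [degIn_eq_sum, degIn_eq_sum, sum_mul_sum, mul_sum, ← sum_add_distrib]
    refine sum_congr rfl fun u _ => ?_
    rw [mul_sum, ← sum_add_distrib]
    refine sum_congr rfl fun v _ => ?_
    simp only [edgeDev, hf]
    ring
  have hmain : d₀ * b ^ 2 * (θ ^ 2 * #Z' * (#U * #V))
      ≤ d * ∑ z ∈ Z', degIn e U z * degIn e V z := by
    calc _ = d₀ * ∑ z ∈ Z', (b * θ * #U) * (b * θ * #V) := by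
          simp only [sum_const, nsmul_eq_mul]; ring
      _ ≤ _ := by
          refine mul_le_mul hdens (sum_le_sum fun z hz => ?_)
            (sum_nonneg fun _ _ => by positivity) (hd₀.trans hdens)
          exact mul_le_mul (hheavyU z hz) (hheavyV z hz) (by positivity)
            (le_trans (by positivity) (hheavyU z hz))
  have h1 := (abs_le.1 hTFle).1
  have h2 : d₀ * b ^ 2 / 2 * (θ ^ 2 * #Z') * (#U * #V) ≤ 1 * (#U * #V) := by
    linarith
  have h3 := le_of_mul_le_mul_right h2 (by positivity)
  refine le_trans ?_ h3
  calc _ = d₀ * b ^ 2 / 2 * (θ ^ 2 * (ρ * Fintype.card Z)) := by ring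
    _ ≤ _ := by gcongr

open Classical in
/-- A removal lemma for tripartite systems on `α`, `α` and `Z` whose `α`–`α` side is dense and whose
other sides are dense only relative to a typical kernel of density `θ`: if every edge of `G` lies
in exactly one triangle and these triangles are edge-disjoint, then `G` is sparse. -/
theorem sparse_removal (δ : ℝ) (hδ : 0 < δ) : ∃ τ : ℝ, 0 < τ ∧ ∃ C : ℝ,
    ∀ (α Z : Type) [Fintype α] [DecidableEq α] [Fintype Z] (G : SimpleGraph α)
      (γ : α → Z → ℝ) (e : α → Z → Prop) (s : α → α → Z) (θ : ℝ),
      IsTypicalKernel γ θ τ → 0 < θ → (∀ u z, e u z → 1 ≤ γ u z) →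
      (∀ u v, G.Adj u v → e u (s u v)) → (∀ u v, s u v = s v u) →
      (∀ u v z, G.Adj u v → e u z → e v z → z = s u v) →
      (∀ u v v', G.Adj u v → G.Adj u v' → s u v = s u v' → v = v') →
      θ * Fintype.card Z ≤ Fintype.card α → C ≤ Fintype.card α → C ≤ θ ^ 2 * Fintype.card Z →
      (#(univ.filter fun p : α × α => G.Adj p.1 p.2) : ℝ) ≤ δ * (Fintype.card α : ℝ) ^ 2 := by
  set d₀ : ℝ := δ / 32 with hd₀
  set b : ℝ := δ / 8 with hb
  set l : ℕ := ⌈4 / (δ / 4)⌉₊ with hl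
  obtain ⟨ε, hε, hε1, hεδ, hεd⟩ : ∃ ε : ℝ, 0 < ε ∧ ε ≤ 1 ∧ ε ≤ δ / 32 ∧
      40 * ε ≤ (d₀ * b ^ 2 / 2) ^ 4 := by
    refine ⟨min 1 (min (δ / 32) ((d₀ * b ^ 2 / 2) ^ 4 / 40)), by positivity, min_le_left _ _,
      (min_le_right _ _).trans (min_le_left _ _), ?_⟩
    have := (min_le_right 1 (min (δ / 32) ((d₀ * b ^ 2 / 2) ^ 4 / 40))).trans (min_le_right _ _)
    linarith
  set M : ℕ := SzemerediRegularity.bound ε l with hM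
  have hMpos : 0 < M := SzemerediRegularity.bound_pos _ _
  have hM0 : (0 : ℝ) < M := by exact_mod_cast hMpos
  have hM1 : (1 : ℝ) ≤ M := by exact_mod_cast hMpos
  set κ : ℝ := 1 / (2 * M) with hκ
  have hκ0 : 0 < κ := by positivity
  have hκ1 : κ ≤ 1 := by rw [hκ, div_le_one (by positivity)]; linarith
  set ρ : ℝ := δ / (8 * M ^ 2) with hρ
  have hρ0 : 0 < ρ := by positivity
  set τ : ℝ := (ε * ρ * κ ^ 4) ^ 2 / 3 with hτ
  have hτ0 : 0 < τ := by positivity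
  have hsq : √(3 * τ) = ε * ρ * κ ^ 4 := by
    rw [hτ, mul_div_cancel₀ _ (by norm_num : (3 : ℝ) ≠ 0), Real.sqrt_sq (by positivity)]
  have hsqρ : √(3 * τ) ≤ ρ := by
    rw [hsq]
    calc _ ≤ 1 * ρ * 1 := by gcongr; exact pow_le_one₀ hκ0.le hκ1
      _ = ρ := by ring
  set c : ℝ := d₀ * b ^ 2 / 2 * ρ with hc
  have hc0 : 0 < c := by positivity
  refine ⟨τ, hτ0, l + M + 1 / c + 1, ?_⟩
  intro α Z _ _ _ G γ e s θ htyp hθ heγ hs hsymm huniq hinj hθm hCm hCN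
  have hc1 : 0 < 1 / c := by positivity
  have hl0 : (0 : ℝ) ≤ l := by positivity
  set m : ℝ := (Fintype.card α : ℝ) with hm
  set N : ℝ := (Fintype.card Z : ℝ) with hN
  have hm0 : 0 < m := by linarith
  have : Nonempty α := by
    have h : (0 : ℝ) < Fintype.card α := hm0
    rw [← Fintype.card_pos_iff]; exact_mod_cast h
  have hlm : l ≤ Fintype.card α := by
    have : (l : ℝ) ≤ Fintype.card α := by rw [← hm]; linarith
    exact_mod_cast this
  obtain ⟨P, hPeq, hlP, hPM, hPunif⟩ := szemeredi_regularity G hε hlm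
  have hpart : ∀ U ∈ P.parts, κ * m ≤ #U := by
    intro U hU
    have h1 := hPeq.average_le_card_part hU
    have hKpos : 0 < #P.parts := card_pos.2 ⟨U, hU⟩
    have h2 : M ≤ Fintype.card α := by
      have : (M : ℝ) ≤ Fintype.card α := by rw [← hm]; linarith
      exact_mod_cast this
    have h3 : Fintype.card α / M ≤ #U :=
      le_trans (by rw [card_univ]; exact Nat.div_le_div_left hPM hKpos) h1
    have h4 : Fintype.card α < M * (Fintype.card α / M + 1) := Nat.lt_mul_div_succ _ hMpos
    have h5 : 1 ≤ #U := card_pos.2 (P.nonempty_of_mem_parts hU)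
    have h6 : Fintype.card α ≤ M * (2 * #U) :=
      h4.le.trans (Nat.mul_le_mul_left _ (by omega))
    have h7 : m ≤ M * (2 * #U) := by rw [hm]; exact_mod_cast h6
    rw [hκ, div_mul_eq_mul_div, one_mul, div_le_iff₀ (by positivity)]
    linarith
  by_contra! hbig
  -- the edges which the cleaning step discards
  let B₁ := (P.nonUniforms G ε).biUnion fun (U, V) ↦ U ×ˢ V
  let B₂ := P.parts.biUnion offDiag
  let B₃ := (P.sparsePairs G d₀).biUnion fun (U, V) ↦ G.interedges U V
  let L₁ := univ.filter fun p : α × α => G.Adj p.1 p.2 ∧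
      degIn e (P.part p.1) (s p.1 p.2) < b * θ * #(P.part p.1)
  let L₂ := univ.filter fun p : α × α => G.Adj p.1 p.2 ∧
      degIn e (P.part p.2) (s p.1 p.2) < b * θ * #(P.part p.2)
  let cell : Finset α × Finset α → Finset (α × α) := fun W => (W.1 ×ˢ W.2).filter fun p =>
      G.Adj p.1 p.2 ∧ G.IsUniform ε W.1 W.2 ∧ d₀ ≤ (G.edgeDensity W.1 W.2 : ℝ) ∧
      b * θ * #W.1 ≤ degIn e W.1 (s p.1 p.2) ∧ b * θ * #W.2 ≤ degIn e W.2 (s p.1 p.2)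
  let K := (P.parts ×ˢ P.parts).biUnion cell
  have hcover : (univ.filter fun p : α × α => G.Adj p.1 p.2) ⊆ B₁ ∪ B₂ ∪ B₃ ∪ L₁ ∪ L₂ ∪ K := by
    rintro ⟨u, v⟩ huv
    simp only [mem_filter, mem_univ, true_and] at huv
    have hu : u ∈ P.part u := P.mem_part (mem_univ u)
    have hv : v ∈ P.part v := P.mem_part (mem_univ v)
    have hU : P.part u ∈ P.parts := P.part_mem.2 (mem_univ u)
    have hV : P.part v ∈ P.parts := P.part_mem.2 (mem_univ v)
    by_contra hnot
    simp only [mem_union, not_or] at hnot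
    obtain ⟨⟨⟨⟨⟨n1, n2⟩, n3⟩, n4⟩, n5⟩, n6⟩ := hnot
    have hne : P.part u ≠ P.part v := fun heq => n2 <| by
      simp only [B₂, mem_biUnion, mem_offDiag]
      exact ⟨P.part u, hU, hu, heq ▸ hv, huv.ne⟩
    have hun : G.IsUniform ε (P.part u) (P.part v) := by
      by_contra hcon
      refine n1 ?_
      simp only [B₁, mem_biUnion]
      exact ⟨(P.part u, P.part v), (P.mk_mem_nonUniforms G).2 ⟨hU, hV, hne, hcon⟩,
        mem_product.2 ⟨hu, hv⟩⟩
    have hde : d₀ ≤ (G.edgeDensity (P.part u) (P.part v) : ℝ) := by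
      by_contra! hcon
      refine n3 ?_
      simp only [B₃, mem_biUnion]
      exact ⟨(P.part u, P.part v), (P.mk_mem_sparsePairs G _ _ _).2 ⟨hU, hV, hne, hcon⟩,
        G.mem_interedges_iff.2 ⟨hu, hv, huv⟩⟩
    have hl1 : b * θ * #(P.part u) ≤ degIn e (P.part u) (s u v) := by
      by_contra! hcon
      exact n4 (by simpa [L₁] using ⟨huv, hcon⟩)
    have hl2 : b * θ * #(P.part v) ≤ degIn e (P.part v) (s u v) := by
      by_contra! hcon
      exact n5 (by simpa [L₂] using ⟨huv, hcon⟩)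
    refine n6 ?_
    simp only [K, mem_biUnion]
    refine ⟨(P.part u, P.part v), mem_product.2 ⟨hU, hV⟩, ?_⟩
    simp only [cell, mem_filter, mem_product]
    exact ⟨⟨hu, hv⟩, huv, hun, hde, hl1, hl2⟩
  have cB₁ : (#B₁ : ℝ) ≤ δ / 8 * m ^ 2 := by
    have := hPeq.sum_nonUniforms_lt univ_nonempty hε hPunif
    rw [card_univ] at this
    refine this.le.trans ?_
    gcongr
    linarith
  have cB₂ : (#B₂ : ℝ) ≤ δ / 8 * m ^ 2 := by
    have := hPeq.card_biUnion_offDiag_le (ε := δ / 4) (by positivity)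
      ((Nat.le_ceil _).trans (by exact_mod_cast hlP))
    rw [card_univ] at this
    refine this.trans (le_of_eq ?_)
    rw [hm]; ring
  have cB₃ : (#B₃ : ℝ) ≤ δ / 8 * m ^ 2 := by
    have := hPeq.card_interedges_sparsePairs_le (G := G) (ε := d₀) (by positivity)
    rw [card_univ] at this
    refine this.trans (le_of_eq ?_)
    rw [hd₀, hm]; ring
  have cL₁ : (#L₁ : ℝ) ≤ δ / 8 * m ^ 2 := by
    refine (card_light_le G P e s (b * θ) (by positivity) hs hinj).trans ?_
    calc b * θ * m * N = b * m * (θ * N) := by ring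
      _ ≤ b * m * m := by gcongr
      _ = _ := by rw [hb]; ring
  have cL₂ : (#L₂ : ℝ) ≤ #L₁ := by
    have : #L₂ ≤ #L₁ := by
      refine card_le_card_of_injOn Prod.swap ?_ Prod.swap_injective.injOn
      rintro ⟨u, v⟩ hp
      simp only [L₂, coe_filter, mem_univ, true_and, Set.mem_ofPred_eq] at hp
      simp only [L₁, coe_filter, mem_univ, true_and, Set.mem_ofPred_eq, Prod.swap]
      rw [hsymm v u]
      exact ⟨hp.1.symm, hp.2⟩
    exact_mod_cast this
  obtain ⟨⟨U, V⟩, hUV, hcell⟩ : ∃ W ∈ P.parts ×ˢ P.parts, 2 * ρ * m ^ 2 ≤ #(cell W) := by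
    by_contra! hsmall
    have cK : (#K : ℝ) ≤ δ / 4 * m ^ 2 := by
      calc (#K : ℝ) ≤ ∑ W ∈ P.parts ×ˢ P.parts, (#(cell W) : ℝ) := by
            exact_mod_cast card_biUnion_le
        _ ≤ ∑ W ∈ P.parts ×ˢ P.parts, 2 * ρ * m ^ 2 := sum_le_sum fun W hW => (hsmall W hW).le
        _ = (#P.parts : ℝ) ^ 2 * (2 * ρ * m ^ 2) := by
            simp only [sum_const, card_product, nsmul_eq_mul, Nat.cast_mul]; ring
        _ ≤ (M : ℝ) ^ 2 * (2 * ρ * m ^ 2) := by gcongr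
        _ = _ := by rw [hρ]; field_simp; ring
    have hall : (#(univ.filter fun p : α × α => G.Adj p.1 p.2) : ℝ)
        ≤ #B₁ + #B₂ + #B₃ + #L₁ + #L₂ + #K := by
      have h1 := card_le_card hcover
      have h2 := card_union_le (B₁ ∪ B₂ ∪ B₃ ∪ L₁ ∪ L₂) K
      have h3 := card_union_le (B₁ ∪ B₂ ∪ B₃ ∪ L₁) L₂
      have h4 := card_union_le (B₁ ∪ B₂ ∪ B₃) L₁
      have h5 := card_union_le (B₁ ∪ B₂) B₃
      have h6 := card_union_le B₁ B₂
      have : #(univ.filter fun p : α × α => G.Adj p.1 p.2)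
        ≤ #B₁ + #B₂ + #B₃ + #L₁ + #L₂ + #K := by omega
      exact_mod_cast this
    have : 0 < δ * m ^ 2 := by positivity
    linarith
  rw [mem_product] at hUV
  obtain ⟨⟨u₀, v₀⟩, h₀⟩ : (cell (U, V)).Nonempty := by
    rw [← card_pos]
    have : (0 : ℝ) < #(cell (U, V)) := lt_of_lt_of_le (by positivity) hcell
    exact_mod_cast this
  simp only [cell, mem_filter] at h₀
  obtain ⟨-, -, hun, hde, -, -⟩ := h₀
  let Z' : Finset Z := univ.filter fun z => b * θ * #U ≤ degIn e U z ∧ b * θ * #V ≤ degIn e V z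
  have hcellZ : (#(cell (U, V)) : ℝ) ≤ ∑ z ∈ Z', ∑ u, γ u z := by
    have h1 : #(cell (U, V)) ≤ #(Z'.sigma fun z => univ.filter fun u => e u z) := by
      refine card_le_card_of_injOn (fun p => ⟨s p.1 p.2, p.1⟩) ?_ ?_
      · rintro ⟨u, v⟩ hp
        simp only [cell, coe_filter, Set.mem_ofPred_eq] at hp
        simp only [coe_sigma, Set.mem_sigma_iff, Z', mem_coe, mem_filter, mem_univ, true_and]
        exact ⟨hp.2.2.2.2, hs _ _ hp.2.1⟩
      · rintro ⟨u, v⟩ hp ⟨u', v'⟩ hp' h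
        simp only [cell, coe_filter, Set.mem_ofPred_eq] at hp hp'
        simp only [Sigma.mk.injEq, heq_eq_eq] at h
        obtain ⟨h2, rfl⟩ := h
        rw [hinj _ _ _ hp.2.1 hp'.2.1 h2]
    calc (#(cell (U, V)) : ℝ) ≤ #(Z'.sigma fun z => univ.filter fun u => e u z) := by
          exact_mod_cast h1
      _ = ∑ z ∈ Z', ∑ u, if e u z then (1 : ℝ) else 0 := by
          rw [card_sigma]; push_cast; simp
      _ ≤ _ := by
          refine sum_le_sum fun z _ => sum_le_sum fun u _ => ?_
          split_ifs with h; exacts [heγ _ _ h, htyp.nonneg _ _]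
  have hZ' : ρ * N ≤ #Z' := by
    have h1 := hcell.trans (hcellZ.trans (htyp.sum_one_le hθ hτ0.le univ Z'))
    rw [card_univ, ← hm, ← hN] at h1
    have h2 : √(3 * τ) * θ * m * N ≤ ρ * m ^ 2 := by
      calc _ = √(3 * τ) * m * (θ * N) := by ring
        _ ≤ ρ * m * m := by gcongr
        _ = _ := by ring
    have h3 : ρ * N * (θ * m) ≤ #Z' * (θ * m) := by
      calc _ = ρ * m * (θ * N) := by ring
        _ ≤ ρ * m * m := by gcongr
        _ ≤ _ := by linarith
    exact le_of_mul_le_mul_right h3 (by positivity)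
  have hfin := no_heavy_uniform_pair htyp hθ hτ0.le heγ huniq hε.le hε1 hκ0 hκ1
    (by positivity : 0 ≤ d₀) (by positivity : 0 ≤ b) hεd (hpart U hUV.1) (hpart V hUV.2) hde hZ'
    hsq.le (fun z hz => (mem_filter.1 hz).2.1) (fun z hz => (mem_filter.1 hz).2.2) hun
  have h1 : θ ^ 2 * N ≤ 1 / c := by
    rw [le_div_iff₀ hc0]
    calc θ ^ 2 * N * c = d₀ * b ^ 2 / 2 * ρ * (θ ^ 2 * N) := by rw [hc]; ring
      _ ≤ 1 := hfin
  linarith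

end Removal

/-! ### From linear forms to a typical kernel -/

section LinearForms
variable {N : ℕ} [NeZero N]

/-- A sum over `x, x', y, y', z, z'` decouples for fixed `z, z'` into squares of sums over one
variable. -/
lemma sum_six (a c : ZMod N → ZMod N → ZMod N → ℝ) :
    ∑ v : Fin 6 → ZMod N, a (v 4) (v 5) (v 0) * a (v 4) (v 5) (v 1) *
        (c (v 4) (v 5) (v 2) * c (v 4) (v 5) (v 3))
      = ∑ p : ZMod N × ZMod N, (∑ x, a p.1 p.2 x) ^ 2 * (∑ y, c p.1 p.2 y) ^ 2 := by
  let E : (Fin 6 → ZMod N) ≃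
      (ZMod N × ZMod N) × (ZMod N × ZMod N) × (ZMod N × ZMod N) :=
    { toFun := fun v => ((v 4, v 5), (v 0, v 1), (v 2, v 3))
      invFun := fun p => ![p.2.1.1, p.2.1.2, p.2.2.1, p.2.2.2, p.1.1, p.1.2]
      left_inv := fun v => by funext i; fin_cases i <;> rfl
      right_inv := fun p => rfl }
  refine (Fintype.sum_equiv E _ (fun p => a p.1.1 p.1.2 p.2.1.1 * a p.1.1 p.1.2 p.2.1.2 *
    (c p.1.1 p.1.2 p.2.2.1 * c p.1.1 p.1.2 p.2.2.2)) (fun v => rfl)).trans ?_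
  rw [Fintype.sum_prod_type]
  refine sum_congr rfl fun p _ => ?_
  simp only [Fintype.sum_prod_type, ← mul_sum, ← sum_mul, sq]

/-- The average of `a z z' x` over `x`, as a function of the pair `(z, z')`. -/
noncomputable def fibreAvg (a : ZMod N → ZMod N → ZMod N → ℝ) (p : ZMod N × ZMod N) : ℝ :=
  (∑ x, a p.1 p.2 x) / N

lemma abs_sub_card_le {X η : ℝ} (h : |X / (N : ℝ) ^ 2 - 1| ≤ η) :
    |X - Fintype.card (ZMod N × ZMod N)| ≤ η * Fintype.card (ZMod N × ZMod N) := by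
  have hN : (0 : ℝ) < N := by exact_mod_cast NeZero.pos N
  have hcard : (Fintype.card (ZMod N × ZMod N) : ℝ) = (N : ℝ) ^ 2 := by
    simp [ZMod.card, sq]
  have hN2 : (0 : ℝ) < (N : ℝ) ^ 2 := by positivity
  rw [hcard, abs_le] at *
  have e : X / (N : ℝ) ^ 2 * (N : ℝ) ^ 2 = X := div_mul_cancel₀ _ hN2.ne'
  constructor <;> nlinarith

lemma sum_fibreAvg_sq (a : ZMod N → ZMod N → ZMod N → ℝ) {η : ℝ}
    (h : |avg (fun v : Fin 6 → ZMod N => a (v 4) (v 5) (v 0) * a (v 4) (v 5) (v 1)) - 1| ≤ η) :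
    |∑ p, fibreAvg a p ^ 2 - Fintype.card (ZMod N × ZMod N)|
      ≤ η * Fintype.card (ZMod N × ZMod N) := by
  have hN : (0 : ℝ) < N := by exact_mod_cast NeZero.pos N
  have h6 := sum_six a (fun _ _ _ => 1)
  simp only [mul_one, sum_const, card_univ, ZMod.card, nsmul_eq_mul] at h6
  have hA : avg (fun v : Fin 6 → ZMod N => a (v 4) (v 5) (v 0) * a (v 4) (v 5) (v 1))
      = (∑ p, fibreAvg a p ^ 2) / N ^ 2 := by
    rw [avg, h6, ← sum_mul]
    simp only [fibreAvg, div_pow, ← sum_div, Fintype.card_pi, ZMod.card, prod_const, card_univ,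
      Fintype.card_fin, Nat.cast_pow]
    field_simp
  rw [hA] at h
  exact abs_sub_card_le h

lemma sum_fibreAvg_pow_four (a : ZMod N → ZMod N → ZMod N → ℝ) {η : ℝ}
    (h : |avg (fun v : Fin 6 → ZMod N => a (v 4) (v 5) (v 0) * a (v 4) (v 5) (v 1) *
      (a (v 4) (v 5) (v 2) * a (v 4) (v 5) (v 3))) - 1| ≤ η) :
    |∑ p, fibreAvg a p ^ 4 - Fintype.card (ZMod N × ZMod N)|
      ≤ η * Fintype.card (ZMod N × ZMod N) := by
  have hN : (0 : ℝ) < N := by exact_mod_cast NeZero.pos N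
  have h6 := sum_six a a
  have hA : avg (fun v : Fin 6 → ZMod N => a (v 4) (v 5) (v 0) * a (v 4) (v 5) (v 1) *
      (a (v 4) (v 5) (v 2) * a (v 4) (v 5) (v 3)))
      = (∑ p, fibreAvg a p ^ 4) / N ^ 2 := by
    rw [avg, h6]
    simp only [← pow_add, Nat.reduceAdd, fibreAvg, div_pow, ← sum_div, Fintype.card_pi, ZMod.card,
      prod_const, card_univ, Fintype.card_fin, Nat.cast_pow]
    field_simp
  rw [hA] at h
  exact abs_sub_card_le h

/-- The normalised indicator function `ν = (N/|S|)·1_S`. -/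
noncomputable def normInd (S : Finset (ZMod N)) (u : ZMod N) : ℝ :=
  (N : ℝ) / (S.card : ℝ) * if u ∈ S then 1 else 0

/-- The second-moment linear form for `(z, z') ↦ E_x ν(x)ν(z-x)ν(z'-x)` is at least its diagonal
`x = x'`, which forces `S` to have at least about `N ^ (2/3)` elements. -/
lemma sq_le_two_mul_card_pow_three {S : Finset (ZMod N)} (hS : S.Nonempty)
    (h : |∑ p, fibreAvg (fun z z' x => normInd S x * normInd S (z - x) * normInd S (z' - x)) p ^ 2
      - Fintype.card (ZMod N × ZMod N)| ≤ 1 * Fintype.card (ZMod N × ZMod N)) :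
    (N : ℝ) ^ 2 ≤ 2 * (#S : ℝ) ^ 3 := by
  have hN : (0 : ℝ) < N := by exact_mod_cast NeZero.pos N
  have hn : (0 : ℝ) < #S := by exact_mod_cast hS.card_pos
  have hcard : (Fintype.card (ZMod N × ZMod N) : ℝ) = N ^ 2 := by
    simp [ZMod.card, sq]
  rw [hcard] at h
  have hν : ∀ u, 0 ≤ normInd S u := fun u => by
    unfold normInd; split_ifs <;> positivity
  have hνsq : ∑ u, normInd S u ^ 2 = N ^ 2 / #S := by
    simp only [normInd, ite_pow, ne_eq, OfNat.ofNat_ne_zero, not_false_eq_true,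
      zero_pow, mul_ite, mul_one, mul_zero, sum_ite_mem, univ_inter, sum_const, nsmul_eq_mul]
    field_simp
  have hshift : ∀ x, ∑ z, normInd S (z - x) ^ 2 = N ^ 2 / #S := fun x => by
    rw [← hνsq]
    exact Fintype.sum_equiv (Equiv.subRight x) _ _ fun z => rfl
  have hdiag : ((N : ℝ) ^ 2 / #S) ^ 3 / N ^ 2 ≤ 2 * N ^ 2 := by
    have hle := (abs_le.1 h).2
    rw [sub_le_iff_le_add, one_mul, ← two_mul] at hle
    refine le_trans ?_ hle
    calc ((N : ℝ) ^ 2 / #S) ^ 3 / N ^ 2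
        = (∑ x, normInd S x ^ 2 * (∑ z, normInd S (z - x) ^ 2) *
            ∑ z', normInd S (z' - x) ^ 2) / N ^ 2 := by
          simp only [hshift, ← sum_mul, hνsq]; ring
      _ = ∑ p : ZMod N × ZMod N,
            (∑ x, (normInd S x * normInd S (p.1 - x) * normInd S (p.2 - x)) ^ 2) / N ^ 2 := by
          rw [← sum_div, sum_comm]
          congr 1
          refine sum_congr rfl fun x _ => ?_
          rw [Fintype.sum_prod_type, mul_assoc, sum_mul_sum, mul_sum]
          refine sum_congr rfl fun z _ => ?_
          rw [mul_sum]
          refine sum_congr rfl fun z' _ => ?_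
          ring
      _ ≤ _ := by
          refine sum_le_sum fun p _ => ?_
          rw [fibreAvg, div_pow]
          gcongr
          refine sum_sq_le_sq_sum_of_nonneg fun x _ => ?_
          exact mul_nonneg (mul_nonneg (hν _) (hν _)) (hν _)
  have h2 : ((N : ℝ) ^ 2 / #S) ^ 3 / N ^ 2 = N ^ 2 * N ^ 2 / #S ^ 3 := by field_simp
  rw [h2, div_le_iff₀ (by positivity)] at hdiag
  have h3 : (N : ℝ) ^ 2 * N ^ 2 ≤ (2 * #S ^ 3) * N ^ 2 := by linarith
  exact le_of_mul_le_mul_right h3 (by positivity)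

end LinearForms

/-! ### The graph of a corner-free set -/

section Corners
variable {N : ℕ} {S : Finset (ZMod N)}

/-- The element of `Z_N` underlying a vertex of `S ⊕ S`. -/
def vtx (u : S ⊕ S) : ZMod N := Sum.elim (fun x => x.1) (fun x => x.1) u

/-- The bipartite graph on `S ⊕ S` whose edges are the points of `A`. -/
def pointGraph (S : Finset (ZMod N)) (A : Finset (ZMod N × ZMod N)) : SimpleGraph (S ⊕ S) where
  Adj
    | .inl x, .inr y => (x.1, y.1) ∈ A
    | .inr y, .inl x => (x.1, y.1) ∈ A
    | _, _ => False
  symm := by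
    constructor
    rintro (x | x) (y | y) h <;> exact h
  loopless := by
    constructor
    rintro (x | x) h <;> exact h

/-- The line given by a vertex of `S ⊕ S` (a column for `Sum.inl`, a row for `Sum.inr`) meets the
antidiagonal `{(x, y) | x + y = z}` in a point of `A`. -/
def meetsDiag (A : Finset (ZMod N × ZMod N)) : S ⊕ S → ZMod N → Prop
  | .inl x, z => (x.1, z - x.1) ∈ A
  | .inr y, z => (z - y.1, y.1) ∈ A

/-- The kernel dominating `meetsDiag`: the indicator of `z - u ∈ S`. -/
noncomputable def diagKernel (u : S ⊕ S) (z : ZMod N) : ℝ := if z - vtx u ∈ S then 1 else 0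

lemma sum_vertices [NeZero N] (f : ZMod N → ℝ) :
    ∑ u : S ⊕ S, f (vtx u) = 2 * ∑ x, (if x ∈ S then 1 else 0) * f x := by
  rw [Fintype.sum_sum_type]
  simp only [vtx, Sum.elim_inl, Sum.elim_inr, ite_mul, one_mul, zero_mul, sum_ite_mem, univ_inter]
  rw [sum_coe_sort S f]; ring

/-- Up to normalisation, the degrees and codegrees of `diagKernel` are the fibre averages of
`ν(x)ν(z-x)` and `ν(x)ν(z-x)ν(z'-x)`. -/
lemma isTypicalKernel_diagKernel [NeZero N] (hS : S.Nonempty) {τ : ℝ}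
    (h₁ : ∑ p, |fibreAvg (fun z _ x => normInd S x * normInd S (z - x)) p ^ 4 - 1|
      ≤ τ * Fintype.card (ZMod N × ZMod N))
    (h₂ : ∑ p, |fibreAvg (fun z z' x => normInd S x * normInd S (z - x) * normInd S (z' - x)) p ^ 4
      - 1| ≤ τ * Fintype.card (ZMod N × ZMod N)) :
    IsTypicalKernel (diagKernel (S := S)) (#S / N) τ := by
  have hN : (0 : ℝ) < N := by exact_mod_cast NeZero.pos N
  have hn : (0 : ℝ) < #S := by exact_mod_cast hS.card_pos
  have hcard : (Fintype.card (ZMod N × ZMod N) : ℝ) = N ^ 2 := by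
    simp [ZMod.card, sq]
  have hm : (Fintype.card (S ⊕ S) : ℝ) = 2 * #S := by
    simp; ring
  have hscale : ∀ c g : ℝ, |(c * g) ^ 4 - c ^ 4| = c ^ 4 * |g ^ 4 - 1| := fun c g => by
    rw [show (c * g) ^ 4 - c ^ 4 = c ^ 4 * (g ^ 4 - 1) by ring, abs_mul,
      abs_of_nonneg (by positivity : 0 ≤ c ^ 4)]
  refine ⟨fun u z => ?_, ?_, ?_⟩
  · unfold diagKernel; split_ifs <;> norm_num
  · have hq : ∀ z z' : ZMod N, ∑ u : S ⊕ S, diagKernel u z * diagKernel u z'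
        = (2 * #S) * (#S / N : ℝ) ^ 2 *
          fibreAvg (fun z z' x => normInd S x * normInd S (z - x) * normInd S (z' - x)) (z, z') := by
      intro z z'
      simp only [diagKernel]
      rw [sum_vertices (fun x => (if z - x ∈ S then (1 : ℝ) else 0) * if z' - x ∈ S then 1 else 0)]
      simp only [fibreAvg, normInd]
      rw [mul_div_assoc', eq_div_iff hN.ne', mul_sum, mul_sum, sum_mul]
      refine sum_congr rfl fun x _ => ?_
      field_simp
    simp only [hq, hm, hscale, ← mul_sum]
    rw [Fintype.sum_prod_type, hcard] at h₂
    rw [ZMod.card]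
    calc _ ≤ (2 * #S * (#S / N : ℝ) ^ 2) ^ 4 * (τ * N ^ 2) := by gcongr
      _ = _ := by ring
  · have hp : ∀ z : ZMod N, ∑ u : S ⊕ S, diagKernel u z
        = (2 * #S) * (#S / N : ℝ) *
          fibreAvg (fun z _ x => normInd S x * normInd S (z - x)) (z, 0) := by
      intro z
      simp only [diagKernel]
      rw [sum_vertices (fun x => if z - x ∈ S then (1 : ℝ) else 0)]
      simp only [fibreAvg, normInd]
      rw [mul_div_assoc', eq_div_iff hN.ne', mul_sum, mul_sum, sum_mul]
      refine sum_congr rfl fun x _ => ?_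
      field_simp
    simp only [hp, hm, hscale, ← mul_sum]
    rw [Fintype.sum_prod_type, hcard] at h₁
    simp only [fibreAvg, sum_const, card_univ, ZMod.card, nsmul_eq_mul, ← mul_sum] at h₁ ⊢
    have h₃ := le_of_mul_le_mul_left (h₁.trans_eq (by ring : _ = N * (τ * N))) hN
    calc _ ≤ (2 * #S * (#S / N : ℝ)) ^ 4 * (τ * N) := by gcongr
      _ = _ := by ring

open Classical in
/-- Each point of `A` gives two ordered pairs of adjacent vertices. -/
lemma two_mul_card_le {A : Finset (ZMod N × ZMod N)} (hA : A ⊆ S ×ˢ S) :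
    2 * #A ≤ #(univ.filter fun p : (S ⊕ S) × (S ⊕ S) => (pointGraph S A).Adj p.1 p.2) := by
  have hS : ∀ a : A, a.1.1 ∈ S ∧ a.1.2 ∈ S := fun a => mem_product.1 (hA a.2)
  let f : A ⊕ A → (S ⊕ S) × (S ⊕ S) := Sum.elim
    (fun a => (.inl ⟨a.1.1, (hS a).1⟩, .inr ⟨a.1.2, (hS a).2⟩))
    (fun a => (.inr ⟨a.1.2, (hS a).2⟩, .inl ⟨a.1.1, (hS a).1⟩))
  have hcard : #(univ : Finset (A ⊕ A)) = 2 * #A := by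
    rw [card_univ, Fintype.card_sum, Fintype.card_coe]; ring
  rw [← hcard]
  refine card_le_card_of_injOn f ?_ ?_
  · rintro (a | a) - <;> simp only [coe_filter, mem_univ, true_and, Set.mem_ofPred_eq] <;> exact a.2
  · rintro (a | a) - (b | b) - h <;> simp [f] at h ⊢ <;>
      exact Subtype.ext (Prod.ext (by tauto) (by tauto))

end Corners

/-- **Corner-free subsets of products of pseudorandom sets.** For every `δ > 0` there
exist `η > 0` and `N₀` such that for all `N ≥ N₀`: if `S ⊆ Z_N` is nonempty,
`ν := (N/|S|)·1_S`, and for every nonempty subset `F` of the twelve factors one has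
`|E[∏_{factors in F} ν(·)] - 1| ≤ η`, then every corner-free `A ⊆ S × S` has
`|A| ≤ δ|S|²`. -/
theorem corner_removal_in_product (δ : ℝ) (hδ : 0 < δ) :
    ∃ η : ℝ, 0 < η ∧ ∃ N₀ : ℕ, ∀ N : ℕ, N₀ ≤ N → ∀ [NeZero N],
      ∀ S : Finset (ZMod N), S.Nonempty →
      (∀ b : Fin 12 → Bool, (∃ i, b i = true) →
        |avg (fun v : Fin 6 → ZMod N =>
          ∏ i : Fin 12,
            if b i then
              productCornerFactors
                (fun u => (N : ℝ) / (S.card : ℝ) * if u ∈ S then 1 else 0)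
                (v 0) (v 1) (v 2) (v 3) (v 4) (v 5) i
            else 1) - 1| ≤ η) →
      ∀ A : Finset (ZMod N × ZMod N), A ⊆ S ×ˢ S →
      (¬ ∃ x y d : ZMod N, d ≠ 0 ∧
        (x, y) ∈ A ∧ (x + d, y) ∈ A ∧ (x, y + d) ∈ A) →
      (A.card : ℝ) ≤ δ * (S.card : ℝ) ^ 2 := by
  classical
  obtain ⟨τ, hτ, C, hrem⟩ := sparse_removal (δ / 2) (by positivity)
  set η : ℝ := min 1 ((τ / 5) ^ 2) with hη
  have hη1 : η ≤ 1 := min_le_left _ _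
  have hητ : 5 * √η ≤ τ := by
    have : √η ≤ τ / 5 := Real.sqrt_le_iff.2 ⟨by positivity, min_le_right _ _⟩
    linarith
  set D : ℝ := max C 1 with hD
  have hD1 : 1 ≤ D := le_max_right _ _
  refine ⟨η, by positivity, ⌈4 * D ^ 3⌉₊ + 1, ?_⟩
  intro N hNbig _ S hS hlin A hAS hcorner
  have hN : (0 : ℝ) < N := by exact_mod_cast NeZero.pos N
  have hn : (0 : ℝ) < #S := by exact_mod_cast hS.card_pos
  have hNN : 4 * D ^ 3 < N := by
    have h1 := Nat.le_ceil (4 * D ^ 3)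
    have h2 : ((⌈4 * D ^ 3⌉₊ + 1 : ℕ) : ℝ) ≤ N := by exact_mod_cast hNbig
    push_cast at h2
    linarith
  change ∀ b : Fin 12 → Bool, (∃ i, b i = true) → |avg (fun v : Fin 6 → ZMod N => ∏ i : Fin 12,
    if b i then productCornerFactors (normInd S) (v 0) (v 1) (v 2) (v 3) (v 4) (v 5) i else 1) - 1|
      ≤ η at hlin
  set a₁ : ZMod N → ZMod N → ZMod N → ℝ := fun z _ x => normInd S x * normInd S (z - x) with ha₁
  set a₂ : ZMod N → ZMod N → ZMod N → ℝ :=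
    fun z z' x => normInd S x * normInd S (z - x) * normInd S (z' - x) with ha₂
  have p2 := sum_fibreAvg_sq a₁ (η := η) (by
    convert hlin ![true, true, true, true, false, false, false, false, false, false, false, false]
      ⟨0, rfl⟩ using 5
    simp [Fin.prod_univ_succ, productCornerFactors, ha₁]; ring)
  have p4 := sum_fibreAvg_pow_four a₁ (η := η) (by
    convert hlin ![true, true, true, true, false, false, true, true, true, true, false, false]
      ⟨0, rfl⟩ using 5
    simp [Fin.prod_univ_succ, productCornerFactors, ha₁]; ring)
  have q2 := sum_fibreAvg_sq a₂ (η := η) (by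
    convert hlin ![true, true, true, true, true, true, false, false, false, false, false, false]
      ⟨0, rfl⟩ using 5
    simp [Fin.prod_univ_succ, productCornerFactors, ha₂]; ring)
  have q4 := sum_fibreAvg_pow_four a₂ (η := η) (by
    convert hlin (fun _ => true) ⟨0, rfl⟩ using 5
    simp [Fin.prod_univ_succ, productCornerFactors, ha₂]; ring)
  have htyp : IsTypicalKernel (diagKernel (S := S)) (#S / N) τ :=
    isTypicalKernel_diagKernel hS
      ((sum_abs_pow_four_sub_one_le _ η hη1 p2 p4).trans (by gcongr))
      ((sum_abs_pow_four_sub_one_le _ η hη1 q2 q4).trans (by gcongr))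
  have hdens : (N : ℝ) ^ 2 ≤ 2 * (#S : ℝ) ^ 3 :=
    sq_le_two_mul_card_pow_three hS (q2.trans (by gcongr))
  -- `|S|³ ≥ N²/2` and `N > 4D³` give `|S|²/N ≥ D`
  have hDN : D * N ≤ (#S : ℝ) ^ 2 := by
    by_contra! hlt
    have h1 : ((#S : ℝ) ^ 2) ^ 3 < (D * N) ^ 3 := by gcongr
    have h2 : ((N : ℝ) ^ 2) ^ 2 ≤ (2 * (#S : ℝ) ^ 3) ^ 2 := by gcongr
    have h3 : N * (N : ℝ) ^ 3 ≤ 4 * D ^ 3 * N ^ 3 := by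
      calc _ = ((N : ℝ) ^ 2) ^ 2 := by ring
        _ ≤ (2 * (#S : ℝ) ^ 3) ^ 2 := h2
        _ = 4 * ((#S : ℝ) ^ 2) ^ 3 := by ring
        _ ≤ 4 * (D * N) ^ 3 := by gcongr
        _ = _ := by ring
    have h4 := le_of_mul_le_mul_right h3 (by positivity)
    linarith
  have hSN : (#S : ℝ) ≤ N := by
    have := card_le_univ S
    rw [ZMod.card] at this
    exact_mod_cast this
  have hDS : D ≤ #S := by
    have h1 : D * N ≤ #S * N := by nlinarith
    exact le_of_mul_le_mul_right h1 hN
  have hm : (Fintype.card (S ⊕ S) : ℝ) = 2 * #S := by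
    simp; ring
  have hCD : C ≤ D := le_max_left _ _
  have key := hrem (S ⊕ S) (ZMod N) (pointGraph S A) diagKernel (meetsDiag A)
    (fun u v => vtx u + vtx v) (#S / N) htyp (by positivity) ?_ ?_ (fun u v => add_comm _ _) ?_ ?_
    ?_ ?_ ?_
  · have h2 : (2 * #A : ℝ) ≤
        #(univ.filter fun p : (S ⊕ S) × (S ⊕ S) => (pointGraph S A).Adj p.1 p.2) := by
      exact_mod_cast two_mul_card_le hAS
    have h3 := h2.trans (by convert key)
    rw [hm] at h3
    linarith
  · rintro (x | y) z h
    · have := (mem_product.1 (hAS h)).2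
      simp only at this
      simp [diagKernel, vtx, this]
    · have := (mem_product.1 (hAS h)).1
      simp only at this
      simp [diagKernel, vtx, this]
  · rintro (x | x) (y | y) h
    · exact h.elim
    · change (x.1, y.1) ∈ A at h
      simpa [meetsDiag, vtx] using h
    · change (y.1, x.1) ∈ A at h
      simpa [meetsDiag, vtx] using h
    · exact h.elim
  -- the three points span a corner of side `z - x - y`
  · have hz : ∀ x y z : ZMod N, (x, y) ∈ A → (x, z - x) ∈ A → (z - y, y) ∈ A → z = x + y := by
      intro x y z h1 h2 h3
      by_contra hne
      refine hcorner ⟨x, y, z - x - y, fun h0 => hne ?_, h1, ?_, ?_⟩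
      · linear_combination h0
      · rwa [show x + (z - x - y) = z - y by ring]
      · rwa [show y + (z - x - y) = z - x by ring]
    rintro (x | x) (y | y) z h h1 h2
    · exact h.elim
    · exact hz _ _ _ h h1 h2
    · exact (hz _ _ _ h h2 h1).trans (add_comm _ _)
    · exact h.elim
  · rintro (x | x) (y | y) (y' | y') h h' heq <;>
      first
        | exact h.elim
        | exact h'.elim
        | exact congrArg _ (Subtype.ext (add_left_cancel heq))
  · rw [hm, ZMod.card, div_mul_cancel₀ _ hN.ne']
    linarith
  · rw [hm]; linarith
  · rw [ZMod.card]
    refine hCD.trans ?_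
    rw [show (#S / N : ℝ) ^ 2 * N = (#S : ℝ) ^ 2 / N by field_simp, le_div_iff₀ hN]
    exact hDN
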